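/- Let T be a rooted tree on a countably infinite vertex set X and let E(T) = 𝒮(T) ∩ E_X be the semilattice of idempotents of 𝒮(T). If T has uncountably many rooted paths, then ∅ ≺ E(T) ≺ E_X; that is, E(T) ⋠ ∅, E(T) ≼ E_X, and E_X ⋠ E(T). -/

import Mathlib

open Set Cardinal

universe u

/-- A chart on `X` (an element of the symmetric inverse monoid `I_X`): a partial
bijection between subsets of `X`, encoded as a functional, injective relation,
i.e. a set of pairs. -/
structure Chart (X : Type u) : Type u where
  rel : Set (X × X)
  functional : ∀ ⦃x y y'⦄, (x, y) ∈ rel → (x, y') ∈ rel → y = y'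
  injective : ∀ ⦃x x' y⦄, (x, y) ∈ rel → (x', y) ∈ rel → x = x'

namespace Chart

variable {X : Type u}

/-- Composition of charts: compose wherever possible. -/
instance : Mul (Chart X) :=
  ⟨fun f g =>
    { rel := {p | ∃ y, (p.1, y) ∈ f.rel ∧ (y, p.2) ∈ g.rel}
      functional := by
        rintro x y y' ⟨z, hz1, hz2⟩ ⟨w, hw1, hw2⟩
        obtain rfl : z = w := f.functional hz1 hw1
        exact g.functional hz2 hw2
      injective := by
        rintro x x' y ⟨z, hz1, hz2⟩ ⟨w, hw1, hw2⟩
        obtain rfl : z = w := g.injective hz2 hw2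
        exact f.injective hz1 hw1 }⟩

/-- The inverse chart. -/
instance : Inv (Chart X) :=
  ⟨fun f =>
    { rel := {p | (p.2, p.1) ∈ f.rel}
      functional := fun _ _ _ h h' => f.injective h h'
      injective := fun _ _ _ h h' => f.functional h h' }⟩

/-- The domain of a chart. -/
def dom (f : Chart X) : Set X := {x | ∃ y, (x, y) ∈ f.rel}

/-- The range (image) of a chart. -/
def ran (f : Chart X) : Set X := {y | ∃ x, (x, y) ∈ f.rel}

end Chart

/-- Membership in the subsemigroup of `I_X` generated by a set of charts. -/
inductive InGen {X : Type u} (S : Set (Chart X)) : Chart X → Prop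
  | base {f : Chart X} : f ∈ S → InGen S f
  | mul {f g : Chart X} : InGen S f → InGen S g → InGen S (f * g)

/-- The subsemigroup of `I_X` generated by a set of charts. -/
def Sgen {X : Type u} (S : Set (Chart X)) : Set (Chart X) := {f | InGen S f}

/-- The Bergman–Shelah preorder `S ≼ T` on subsets of `I_X`: there is a countable
subset `U ⊆ I_X` with `S` contained in the subsemigroup generated by `T ∪ U`. -/
def BSleq {X : Type u} (S T : Set (Chart X)) : Prop :=
  ∃ U : Set (Chart X), U.Countable ∧ S ⊆ Sgen (T ∪ U)

/-- Bergman–Shelah equivalence `S ≈ T`. -/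
def BSequiv {X : Type u} (S T : Set (Chart X)) : Prop := BSleq S T ∧ BSleq T S

/-- The Bergman–Shelah preorder relative to a cardinal `κ`: `S ≼_κ T` iff there is
`U ⊆ I_X` with `|U| < κ` and `S` contained in the subsemigroup generated by `T ∪ U`. -/
def BSleqC {X : Type u} (κ : Cardinal.{u}) (S T : Set (Chart X)) : Prop :=
  ∃ U : Set (Chart X), #↥U < κ ∧ S ⊆ Sgen (T ∪ U)

/-- Bergman–Shelah equivalence relative to a cardinal `κ`. -/
def BSequivC {X : Type u} (κ : Cardinal.{u}) (S T : Set (Chart X)) : Prop :=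
  BSleqC κ S T ∧ BSleqC κ T S

/-- A chart is a permutation of `X` if it is everywhere defined and surjective. -/
def IsPermChart {X : Type u} (f : Chart X) : Prop :=
  (∀ x : X, ∃ y, (x, y) ∈ f.rel) ∧ ∀ y : X, ∃ x, (x, y) ∈ f.rel

/-- The partwise stabiliser of a family of subsets of `X`: all permutations of `X`
mapping each member of the family onto itself. -/
def PStab {X : Type u} (P : Set (Set X)) : Set (Chart X) :=
  {f | IsPermChart f ∧ ∀ B ∈ P, {y | ∃ x ∈ B, (x, y) ∈ f.rel} = B}

/-- A subset of `I_X` closed under composition. -/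
def IsSubsemigroup {X : Type u} (S : Set (Chart X)) : Prop :=
  ∀ f ∈ S, ∀ g ∈ S, f * g ∈ S

/-- A subsemigroup of `I_X` closed under inversion. -/
def IsInverseSubsemigroup {X : Type u} (S : Set (Chart X)) : Prop :=
  IsSubsemigroup S ∧ ∀ f ∈ S, f⁻¹ ∈ S

/-- The orbit of a point under a set of charts: `{x} ∪ {xf : f ∈ M, x ∈ dom f}`. -/
def ChartOrbit {X : Type u} (M : Set (Chart X)) (x : X) : Set X :=
  insert x {y | ∃ f ∈ M, (x, y) ∈ f.rel}

/-- The cone of a point under a set of charts: `{xs : s ∈ S, x ∈ dom s}`. -/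
def ChartCone {X : Type u} (S : Set (Chart X)) (x : X) : Set X :=
  {y | ∃ f ∈ S, (x, y) ∈ f.rel}

/-- The semilattice of idempotents of `I_X`: the partial identity charts. -/
def EX (X : Type u) : Set (Chart X) := {f | ∀ x y : X, (x, y) ∈ f.rel → y = x}

/-- A `κ`-uniform partition: every part has cardinality `κ`. -/
def IsUniformPartition {X : Type u} (κ : Cardinal.{u}) (P : Set (Set X)) : Prop :=
  Setoid.IsPartition P ∧ ∀ B ∈ P, #↥B = κ

/-- A `κ`-unbounded partition: all parts have cardinality `< κ` but no cardinal
`c < κ` bounds the cardinalities of all parts. -/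
def IsUnboundedPartition {X : Type u} (κ : Cardinal.{u}) (P : Set (Set X)) : Prop :=
  Setoid.IsPartition P ∧ (∀ B ∈ P, #↥B < κ) ∧ ¬∃ c < κ, ∀ B ∈ P, #↥B ≤ c

/-- A `κ`-bounded partition: some cardinal `c < κ` bounds the cardinalities of
all parts. -/
def IsBoundedPartition {X : Type u} (κ : Cardinal.{u}) (P : Set (Set X)) : Prop :=
  Setoid.IsPartition P ∧ ∃ c < κ, ∀ B ∈ P, #↥B ≤ c

/-- A rooted tree on (a subset of) `X`, encoded via its parent function: every
vertex reaches the root by finitely many applications of `par`. -/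
structure RTree (X : Type u) : Type u where
  verts : Set X
  root : X
  root_mem : root ∈ verts
  par : X → X
  par_mem : ∀ x ∈ verts, par x ∈ verts
  par_root : par root = root
  par_reaches : ∀ x ∈ verts, ∃ n : ℕ, par^[n] x = root

namespace RTree

variable {X : Type u}

/-- `T.anc x y` : `x` is an ancestor of `y` (or `x = y`), i.e. `x` lies on the
rooted path to `y`. -/
def anc (T : RTree X) (x y : X) : Prop := ∃ n : ℕ, T.par^[n] y = x

/-- The level of a vertex: its distance to the root. -/
noncomputable def level (T : RTree X) (x : X) : ℕ := sInf {n : ℕ | T.par^[n] x = T.root}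

/-- The children of a vertex. -/
def children (T : RTree X) (x : X) : Set X :=
  {y | y ∈ T.verts ∧ T.par y = x ∧ y ≠ x}

/-- The neighbours of a vertex in the tree (its children together with its
parent, if the vertex is not the root); the degree of the vertex is the size
of this set. -/
def nbhd (T : RTree X) (x : X) : Set X :=
  {y | y ∈ T.verts ∧ ((T.par y = x ∧ y ≠ x) ∨ (T.par x = y ∧ x ≠ y))}

/-- `P` is the vertex set of a (finite or infinite) path of `T` starting at the
root: a nonempty set of vertices closed under taking parents and linearly
ordered by ancestry. -/
def IsRootedPath (T : RTree X) (P : Set X) : Prop :=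
  P.Nonempty ∧ P ⊆ T.verts ∧ (∀ x ∈ P, T.par x ∈ P) ∧
    ∀ x ∈ P, ∀ y ∈ P, T.anc x y ∨ T.anc y x

end RTree

/-- `T'` is a subtree of `T`: a rooted tree on a subset of the vertices of `T`,
with the same root and the same parent relation. -/
def IsSubtree {X : Type u} (T' T : RTree X) : Prop :=
  T'.verts ⊆ T.verts ∧ T'.root = T.root ∧ ∀ x ∈ T'.verts, T'.par x = T.par x

/-- `Q` is a quasi-subtree of `T`: a rooted tree on a subset of the vertices of
`T` preserving the ancestry relation and the levels of `T`. -/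
def IsQuasiSubtree {X : Type u} (Q T : RTree X) : Prop :=
  Q.verts ⊆ T.verts ∧
    (∀ x ∈ Q.verts, ∀ y ∈ Q.verts, (Q.anc x y ↔ T.anc x y)) ∧
    ∀ x ∈ Q.verts, ∀ y ∈ Q.verts, (Q.level x = Q.level y ↔ T.level x = T.level y)

/-- Isomorphism of rooted trees: a bijection of the vertex sets mapping root to
root and commuting with the parent functions. -/
def RTreeIso {X : Type u} {Y : Type u} (T : RTree X) (R : RTree Y) : Prop :=
  ∃ φ : X → Y, Set.BijOn φ T.verts R.verts ∧ φ T.root = R.root ∧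
    ∀ x ∈ T.verts, φ (T.par x) = R.par (φ x)

/-- The semigroup `𝒮(T)` of path-bijections of a rooted tree `T`: charts whose
domain and range are vertex sets of rooted paths and which preserve levels. -/
def pathSg {X : Type u} (T : RTree X) : Set (Chart X) :=
  {f | (∃ P, T.IsRootedPath P ∧ Chart.dom f = P) ∧
    (∃ Q, T.IsRootedPath Q ∧ Chart.ran f = Q) ∧
    ∀ x y : X, (x, y) ∈ f.rel → T.level y = T.level x}

/-!
Countably many charts generate only countably many charts, whereas `E(T)` contains a partial
identity for each rooted path; hence `E(T) ⋠ ∅`.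

For `E_X ⋠ E(T)`, call a family of sets of polynomial growth if its number of traces on an
`n`-element set is polynomially bounded in `n`. The rooted paths have at most `n + 1` traces on `n`
vertices, because a nonempty trace is determined by its deepest vertex. Polynomial growth is
inherited by pairwise intersections and by preimages under a fixed chart, so for every word in
countably many given charts and a placeholder for elements of `E(T)`, the charts it produces have
domains forming a family of polynomial growth. There are countably many words, and a diagonal
argument over disjoint infinite sets finds a subset of `X` in none of the corresponding families;
its partial identity is not generated.
-/

section PolynomialGrowth

open scoped Function

variable {α β ι : Type*} {C D : Set (Set α)}

/-- A family of sets has polynomial growth if its shatter function, the largest number of traces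
`A ∩ F` on an `n`-element set `F`, is bounded by `(n + 1) ^ k` for some `k`. Counting in `ℕ∞` makes
the finiteness of the set of traces part of the condition. -/
def HasPolynomialGrowth (C : Set (Set α)) : Prop :=
  ∃ k : ℕ, ∀ F : Set α, F.Finite → ((· ∩ F) '' C).encard ≤ (F.encard + 1) ^ k

theorem encard_image2_le {γ : Type*} (f : α → β → γ) (s : Set α) (t : Set β) :
    (image2 f s t).encard ≤ s.encard * t.encard := by
  rw [← image_uncurry_prod, ← encard_prod]
  exact encard_image_le _ _

theorem encard_setRel_image_le {R : SetRel α β}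
    (hR : ∀ ⦃x y y'⦄, (x, y) ∈ R → (x, y') ∈ R → y = y') (F : Set α) :
    (R.image F).encard ≤ F.encard := by
  have hinj : InjOn Prod.fst {p ∈ R | p.1 ∈ F} := by
    rintro ⟨x, y⟩ ⟨hy, -⟩ ⟨_, y'⟩ ⟨hy', -⟩ rfl
    exact congrArg (Prod.mk x) (hR hy hy')
  calc (R.image F).encard
      ≤ (Prod.snd '' {p ∈ R | p.1 ∈ F}).encard :=
        encard_le_encard fun y ⟨x, hx, hxy⟩ => ⟨(x, y), ⟨hxy, hx⟩, rfl⟩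
    _ ≤ {p ∈ R | p.1 ∈ F}.encard := encard_image_le _ _
    _ ≤ F.encard := encard_le_encard_of_injOn (fun _ hp => hp.2) hinj

namespace HasPolynomialGrowth

theorem singleton (A : Set α) : HasPolynomialGrowth {A} :=
  ⟨0, fun F _ => by simp⟩

theorem mono (hD : HasPolynomialGrowth D) (h : C ⊆ D) : HasPolynomialGrowth C := by
  obtain ⟨k, hk⟩ := hD
  exact ⟨k, fun F hF => (encard_le_encard (image_mono h)).trans (hk F hF)⟩

theorem image2_inter (hC : HasPolynomialGrowth C) (hD : HasPolynomialGrowth D) :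
    HasPolynomialGrowth (image2 (· ∩ ·) C D) := by
  obtain ⟨k, hk⟩ := hC
  obtain ⟨l, hl⟩ := hD
  refine ⟨k + l, fun F hF => ?_⟩
  calc ((· ∩ F) '' image2 (· ∩ ·) C D).encard
      = (image2 (· ∩ ·) ((· ∩ F) '' C) ((· ∩ F) '' D)).encard := by
        rw [image_image2_distrib fun A B => inter_inter_distrib_right A B F]
    _ ≤ ((· ∩ F) '' C).encard * ((· ∩ F) '' D).encard := encard_image2_le _ _ _
    _ ≤ (F.encard + 1) ^ k * (F.encard + 1) ^ l := mul_le_mul' (hk F hF) (hl F hF)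
    _ = (F.encard + 1) ^ (k + l) := (pow_add _ _ _).symm

theorem image_preimage {C : Set (Set β)} (hC : HasPolynomialGrowth C) {R : SetRel α β}
    (hR : ∀ ⦃x y y'⦄, (x, y) ∈ R → (x, y') ∈ R → y = y') :
    HasPolynomialGrowth (R.preimage '' C) := by
  obtain ⟨k, hk⟩ := hC
  refine ⟨k, fun F hF => ?_⟩
  have hcard : (R.image F).encard ≤ F.encard := encard_setRel_image_le hR F
  have htrace (B : Set β) : R.preimage B ∩ F = R.preimage (B ∩ R.image F) ∩ F := by
    ext x
    constructor
    · rintro ⟨⟨y, hy, hxy⟩, hx⟩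
      exact ⟨⟨y, ⟨hy, x, hx, hxy⟩, hxy⟩, hx⟩
    · rintro ⟨⟨y, hy, hxy⟩, hx⟩
      exact ⟨⟨y, hy.1, hxy⟩, hx⟩
  calc ((· ∩ F) '' (R.preimage '' C)).encard
      = ((fun B => R.preimage B ∩ F) '' ((· ∩ R.image F) '' C)).encard := by
        simp only [image_image, ← htrace]
    _ ≤ ((· ∩ R.image F) '' C).encard := encard_image_le _ _
    _ ≤ ((R.image F).encard + 1) ^ k :=
        hk _ (finite_of_encard_le_coe (hcard.trans_eq hF.encard_eq_coe))
    _ ≤ (F.encard + 1) ^ k := by gcongr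

theorem isLowerSet_isChain [Preorder α] :
    HasPolynomialGrowth {P : Set α | IsLowerSet P ∧ IsChain (· ≤ ·) P} := by
  refine ⟨1, fun F hF => ?_⟩
  have htrace : (· ∩ F) '' {P : Set α | IsLowerSet P ∧ IsChain (· ≤ ·) P} ⊆
      insert ∅ ((fun x => Iic x ∩ F) '' F) := by
    rintro _ ⟨P, ⟨hlower, hchain⟩, rfl⟩
    obtain hempty | hne := (P ∩ F).eq_empty_or_nonempty
    · exact Or.inl hempty
    obtain ⟨x, ⟨hxP, hxF⟩, hmax⟩ := (hF.inter_of_right P).exists_maximal hne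
    have hle {y : α} (hyP : y ∈ P) (hyF : y ∈ F) : y ≤ x :=
      (hchain.total hyP hxP).elim id (hmax ⟨hyP, hyF⟩)
    exact Or.inr ⟨x, hxF, Subset.antisymm (fun y hy => ⟨hlower hy.1 hxP, hy.2⟩)
      fun y hy => ⟨hle hy.1 hy.2, hy.2⟩⟩
  calc ((· ∩ F) '' {P : Set α | IsLowerSet P ∧ IsChain (· ≤ ·) P}).encard
      ≤ (insert ∅ ((fun x => Iic x ∩ F) '' F)).encard := encard_le_encard htrace
    _ ≤ ((fun x => Iic x ∩ F) '' F).encard + 1 := encard_insert_le _ _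
    _ ≤ F.encard + 1 := by gcongr; exact encard_image_le _ _
    _ = (F.encard + 1) ^ 1 := (pow_one _).symm

end HasPolynomialGrowth

theorem exists_add_one_pow_lt_two_pow (k : ℕ) : ∃ n : ℕ, (n + 1) ^ k < 2 ^ n := by
  have hlim := (tendsto_pow_const_div_const_pow_of_one_lt k (one_lt_two (α := ℝ))).comp
    (Filter.tendsto_add_atTop_nat 1)
  obtain ⟨n, hn⟩ := (hlim.eventually_lt_const (one_half_pos (α := ℝ))).exists
  refine ⟨n, ?_⟩
  have hlt : ((n : ℝ) + 1) ^ k < 1 / 2 * 2 ^ (n + 1) := by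
    simpa only [Function.comp_apply, Nat.cast_add_one] using (div_lt_iff₀ (by positivity)).1 hn
  rw [pow_succ'] at hlt
  have : ((n : ℝ) + 1) ^ k < 2 ^ n := by linarith
  exact_mod_cast this

theorem HasPolynomialGrowth.exists_subset_forall_inter_ne (hC : HasPolynomialGrowth C) {S : Set α}
    (hS : S.Infinite) : ∃ B ⊆ S, ∀ A ∈ C, A ∩ S ≠ B := by
  obtain ⟨k, hk⟩ := hC
  obtain ⟨n, hn⟩ := exists_add_one_pow_lt_two_pow k
  obtain ⟨F, hFS, hF, hFn⟩ := hS.exists_subset_ncard_eq n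
  by_contra! htrace
  have hpow : 𝒫 F ⊆ (· ∩ F) '' C := by
    intro B hB
    obtain ⟨A, hA, hAB⟩ := htrace B (hB.trans hFS)
    refine ⟨A, hA, ?_⟩
    calc A ∩ F = A ∩ S ∩ F := by rw [inter_assoc, inter_eq_right.2 hFS]
      _ = B := by rw [hAB, inter_eq_left.2 hB]
  have hle : (2 : ℕ∞) ^ n ≤ (n + 1) ^ k :=
    calc (2 : ℕ∞) ^ n = (𝒫 F).encard := by
          rw [← hF.powerset.cast_ncard_eq, ncard_powerset F hF, hFn]
          norm_cast
      _ ≤ ((· ∩ F) '' C).encard := encard_le_encard hpow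
      _ ≤ (n + 1) ^ k := by rw [← hFn, hF.cast_ncard_eq]; exact hk F hF
  exact absurd hn (not_lt.2 (by exact_mod_cast hle))

theorem exists_pairwise_disjoint_infinite (ι α : Type*) [Countable ι] [Infinite α] :
    ∃ S : ι → Set α, (∀ i, (S i).Infinite) ∧ Pairwise (Disjoint on S) := by
  obtain ⟨f, hf⟩ := exists_injective_nat (ι × ℕ)
  have he : Function.Injective fun p => Infinite.natEmbedding α (f p) :=
    (Infinite.natEmbedding α).injective.comp hf
  refine ⟨fun i => range fun n => Infinite.natEmbedding α (f (i, n)),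
    fun i => infinite_range_of_injective (he.comp (Prod.mk_right_injective i)), fun i j hij => ?_⟩
  rw [Function.onFun, disjoint_left]
  rintro _ ⟨m, rfl⟩ ⟨n, hn⟩
  exact hij (congrArg Prod.fst (he hn)).symm

theorem exists_forall_notMem_of_hasPolynomialGrowth [Infinite α] [Countable ι]
    {C : ι → Set (Set α)} (hC : ∀ i, HasPolynomialGrowth (C i)) : ∃ A : Set α, ∀ i, A ∉ C i := by
  obtain ⟨S, hS, hdisj⟩ := exists_pairwise_disjoint_infinite ι α
  choose B hBS hB using fun i => (hC i).exists_subset_forall_inter_ne (hS i)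
  refine ⟨⋃ i, B i, fun i hi => hB i _ hi (Subset.antisymm ?_ fun x hx => ?_)⟩
  · rintro x ⟨hx, hxi⟩
    obtain ⟨j, hj⟩ := mem_iUnion.1 hx
    obtain rfl : j = i := hdisj.eq (not_disjoint_iff.2 ⟨x, hBS j hj, hxi⟩)
    exact hj
  · exact ⟨mem_iUnion_of_mem i hx, hBS i hx⟩

end PolynomialGrowth

section Generation

open scoped Pointwise

variable {X : Type u} {S T : Set (Chart X)}

theorem Chart.rel_injective : Function.Injective (Chart.rel : Chart X → Set (X × X)) := by
  rintro ⟨_, _, _⟩ ⟨_, _, _⟩ rfl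
  rfl

instance : Semigroup (Chart X) where
  mul_assoc f g h := Chart.rel_injective (SetRel.comp_assoc f.rel g.rel h.rel)

instance {ι : Type*} [Countable ι] : Countable (FreeSemigroup ι) :=
  Function.Injective.countable (f := fun w => (w.head, w.tail)) fun _ _ h =>
    FreeSemigroup.ext (congrArg Prod.fst h) (congrArg Prod.snd h)

theorem Sgen_iUnion_subset {ι : Type*} (G : ι → Set (Chart X)) :
    Sgen (⋃ i, G i) ⊆ ⋃ w, FreeSemigroup.lift G w := by
  intro f hf
  induction hf with
  | base hf =>
    obtain ⟨i, hi⟩ := mem_iUnion.1 hf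
    exact mem_iUnion_of_mem (FreeSemigroup.of i) hi
  | mul _ _ ihf ihg =>
    obtain ⟨v, hv⟩ := mem_iUnion.1 ihf
    obtain ⟨w, hw⟩ := mem_iUnion.1 ihg
    refine mem_iUnion_of_mem (v * w) ?_
    rw [map_mul]
    exact mul_mem_mul hv hw

theorem BSleq.of_subset (h : S ⊆ T) : BSleq S T :=
  ⟨∅, countable_empty, fun _ hf => InGen.base (Or.inl (h hf))⟩

theorem BSleq.exists_countable_cover (h : BSleq S T) {p : Set (Chart X) → Prop} (hT : p T)
    (hsingleton : ∀ u, p {u}) (hmul : ∀ A B, p A → p B → p (A * B)) :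
    ∃ 𝒢 : Set (Set (Chart X)), 𝒢.Countable ∧ (∀ A ∈ 𝒢, p A) ∧ S ⊆ ⋃₀ 𝒢 := by
  obtain ⟨U, hU, hS⟩ := h
  have : Countable U := hU.to_subtype
  let G : Option U → Set (Chart X) := fun o => o.elim T fun u => {u.1}
  have hG : ⋃ o, G o = T ∪ U :=
    (iUnion_option G).trans (congrArg (T ∪ ·) (iUnion_of_singleton_coe U))
  refine ⟨range (FreeSemigroup.lift G), countable_range _, ?_, ?_⟩
  · rintro _ ⟨w, rfl⟩
    have hletter (o : Option U) : p (G o) := by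
      cases o
      exacts [hT, hsingleton _]
    induction w using FreeSemigroup.recOnMul with
    | ih1 o => exact hletter o
    | ih2 o w ho hw =>
      rw [map_mul]
      exact hmul _ _ ho hw
  · rw [sUnion_range]
    exact hS.trans (hG ▸ Sgen_iUnion_subset G)

theorem BSleq.countable (h : BSleq S T) (hT : T.Countable) : S.Countable := by
  obtain ⟨𝒢, h𝒢, hcountable, hS⟩ := h.exists_countable_cover hT countable_singleton
    fun A B hA hB => image2_mul (s := A) (t := B) ▸ hA.image2 hB (· * ·)
  exact (h𝒢.sUnion hcountable).mono hS

end Generation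

section Idempotents

open scoped Pointwise

variable {X : Type u} {S : Set (Chart X)}

/-- The partial identity `id_A`, the idempotent of `I_X` with domain `A`. -/
def Chart.partialId (A : Set X) : Chart X where
  rel := {p | p.1 ∈ A ∧ p.2 = p.1}
  functional := fun _ _ _ h h' => h.2.trans h'.2.symm
  injective := fun _ _ _ h h' => h.2.symm.trans h'.2

theorem Chart.dom_partialId (A : Set X) : (partialId A).dom = A :=
  Set.ext fun x => ⟨fun ⟨_, h⟩ => h.1, fun h => ⟨x, h, rfl⟩⟩

theorem Chart.ran_partialId (A : Set X) : (partialId A).ran = A :=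
  Set.ext fun x => ⟨fun ⟨_, h, (hxy : x = _)⟩ => hxy ▸ h, fun h => ⟨x, h, rfl⟩⟩

theorem Chart.partialId_mem_EX (A : Set X) : partialId A ∈ EX X := fun _ _ h => h.2

theorem preimage_rel_of_mem_EX {f : Chart X} (hf : f ∈ EX X) (B : Set X) :
    SetRel.preimage f.rel B = f.dom ∩ B := by
  ext x
  constructor
  · rintro ⟨y, hy, hxy⟩
    exact ⟨⟨y, hxy⟩, hf x y hxy ▸ hy⟩
  · rintro ⟨⟨y, hxy⟩, hx⟩
    exact ⟨y, (hf x y hxy).symm ▸ hx, hxy⟩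

/-- A set of charts preserves polynomial growth if the preimages `Bf⁻¹` of the members `B` of a
family of polynomial growth under the charts `f` of the set again form such a family. Unlike
polynomial growth of the set of domains, this property is closed under products. -/
def PreservesPolynomialGrowth (A : Set (Chart X)) : Prop :=
  ∀ ⦃C : Set (Set X)⦄, HasPolynomialGrowth C →
    HasPolynomialGrowth (image2 (fun f B => SetRel.preimage f.rel B) A C)

namespace PreservesPolynomialGrowth

theorem singleton (u : Chart X) : PreservesPolynomialGrowth {u} := fun C hC => by
  rw [image2_singleton_left]
  exact hC.image_preimage u.functional

theorem mul {A B : Set (Chart X)} (hA : PreservesPolynomialGrowth A)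
    (hB : PreservesPolynomialGrowth B) : PreservesPolynomialGrowth (A * B) := fun C hC => by
  rw [← image2_mul, image2_assoc fun f g D => SetRel.preimage_comp f.rel g.rel D]
  exact hA (hB hC)

theorem of_subset_EX (hS : S ⊆ EX X) (hdom : HasPolynomialGrowth (Chart.dom '' S)) :
    PreservesPolynomialGrowth S := fun C hC => by
  refine (hdom.image2_inter hC).mono ?_
  rintro _ ⟨f, hf, B, hB, rfl⟩
  exact ⟨f.dom, mem_image_of_mem _ hf, B, hB, (preimage_rel_of_mem_EX (hS hf) B).symm⟩

theorem image_dom {A : Set (Chart X)} (hA : PreservesPolynomialGrowth A) :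
    HasPolynomialGrowth (Chart.dom '' A) := by
  have h := hA (HasPolynomialGrowth.singleton univ)
  simp only [image2_singleton_right, SetRel.preimage_univ_right] at h
  exact h

end PreservesPolynomialGrowth

theorem not_BSleq_EX_of_hasPolynomialGrowth [Infinite X] (hS : S ⊆ EX X)
    (hdom : HasPolynomialGrowth (Chart.dom '' S)) : ¬ BSleq (EX X) S := by
  intro h
  obtain ⟨𝒢, h𝒢, hgrowth, hcover⟩ := h.exists_countable_cover
    (PreservesPolynomialGrowth.of_subset_EX hS hdom) PreservesPolynomialGrowth.singleton
    fun _ _ => PreservesPolynomialGrowth.mul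
  have : Countable 𝒢 := h𝒢.to_subtype
  obtain ⟨A, hA⟩ := exists_forall_notMem_of_hasPolynomialGrowth
    fun G : 𝒢 => (hgrowth G G.2).image_dom
  obtain ⟨G, hG, hAG⟩ := hcover (Chart.partialId_mem_EX A)
  exact hA ⟨G, hG⟩ ⟨_, hAG, Chart.dom_partialId A⟩

end Idempotents

namespace RTree

variable {X : Type u} (T : RTree X)

/-- The ancestry preorder of a rooted tree, in which the root is smallest. It need not be
antisymmetric because `T.par` is unconstrained outside `T.verts`. -/
abbrev ancPreorder : Preorder X where
  le := T.anc
  le_refl _ := ⟨0, rfl⟩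
  le_trans := by
    rintro _ _ z ⟨m, rfl⟩ ⟨n, rfl⟩
    exact ⟨m + n, Function.iterate_add_apply _ _ _ _⟩

variable {T} in
theorem IsRootedPath.mem_of_anc {P : Set X} (hP : T.IsRootedPath P) {x y : X} (hy : y ∈ P)
    (h : T.anc x y) : x ∈ P := by
  obtain ⟨n, rfl⟩ := h
  exact MapsTo.iterate hP.2.2.1 n hy

theorem hasPolynomialGrowth_isRootedPath : HasPolynomialGrowth {P | T.IsRootedPath P} := by
  let _ := T.ancPreorder
  refine HasPolynomialGrowth.isLowerSet_isChain.mono fun P hP => ⟨?_, ?_⟩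
  · exact fun x y hxy hx => hP.mem_of_anc hx hxy
  · exact fun x hx y hy _ => hP.2.2.2 x hx y hy

theorem image_dom_pathSg_inter_EX :
    Chart.dom '' (pathSg T ∩ EX X) = {P | T.IsRootedPath P} := by
  refine Subset.antisymm ?_ fun P hP => ?_
  · rintro _ ⟨f, ⟨⟨⟨P, hP, rfl⟩, -⟩, -⟩, rfl⟩
    exact hP
  · exact ⟨Chart.partialId P, ⟨⟨⟨P, hP, Chart.dom_partialId P⟩, ⟨P, hP, Chart.ran_partialId P⟩,
      fun x y hxy => congrArg T.level hxy.2⟩, Chart.partialId_mem_EX P⟩, Chart.dom_partialId P⟩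

end RTree

theorem stmt19_general {X : Type u} (T : RTree X)
    (hunc : ¬ {P : Set X | T.IsRootedPath P}.Countable) :
    ¬ BSleq (pathSg T ∩ EX X) (∅ : Set (Chart X)) ∧
      BSleq (pathSg T ∩ EX X) (EX X) ∧
      ¬ BSleq (EX X) (pathSg T ∩ EX X) := by
  have : Infinite X := not_finite_iff_infinite.1 fun _ => hunc (to_countable _)
  have hdom := T.image_dom_pathSg_inter_EX
  refine ⟨fun h => hunc ?_, BSleq.of_subset inter_subset_right,
    not_BSleq_EX_of_hasPolynomialGrowth inter_subset_right ?_⟩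
  · exact hdom ▸ (h.countable countable_empty).image Chart.dom
  · exact hdom ▸ T.hasPolynomialGrowth_isRootedPath

/-- for a rooted tree `T` on a countably infinite vertex set `X`
with uncountably many rooted paths, the semilattice of idempotents
`E(T) = 𝒮(T) ∩ E_X` satisfies `∅ ≺ E(T) ≺ E_X`: `E(T) ⋠ ∅`, `E(T) ≼ E_X` and
`E_X ⋠ E(T)`. -/
theorem stmt19 {X : Type u} [Countable X] [Infinite X] (T : RTree X)
    (hT : T.verts = Set.univ)
    (hunc : ¬ {P : Set X | T.IsRootedPath P}.Countable) :
    ¬ BSleq (pathSg T ∩ EX X) (∅ : Set (Chart X)) ∧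
      BSleq (pathSg T ∩ EX X) (EX X) ∧
      ¬ BSleq (EX X) (pathSg T ∩ EX X) :=
  stmt19_general T hunc
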